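/- Let Δ ∈ (0, 1) and let l be a positive integer. Then for every x with |x| ∈ [Δ, 1], one has |R_l(x; Δ)| ≤ 2·e^{−2l·arcsin(Δ)}. -/

import Mathlib

/-!
The map `x ↦ -1 + 2 (x² - Δ²) / (1 - Δ²)` sends `Δ ≤ |x| ≤ 1` into `[-1, 1]`, where `|T_l| ≤ 1`.
The denominator is evaluated at `-y` with `y = (1 + Δ²) / (1 - Δ²)`, so up to sign it is
`T_l y = cosh (l * arcosh y) ≥ exp (l * arcosh y) / 2` (`half_exp_le_eval_T`).

It remains to see `arcosh y ≥ 2 a` for `a = arcsin Δ`, that is, `cosh (2 a) ≤ y`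
(`cosh_two_mul_arcsin_le`). As `y = 2 / cos² a - 1` and `cosh (2 a) = 2 cosh² a - 1`, this is
`cosh a * cos a ≤ 1` (`cosh_mul_cos_le_one`), which holds on `[0, π/2]` by monotonicity.
-/

/-- The eigenstate-filtering polynomial
`R_l(x; Δ) = T_l(−1 + 2(x² − Δ²)/(1 − Δ²)) / T_l(−1 − 2Δ²/(1 − Δ²))`,
where `T_l` is the Chebyshev polynomial of the first kind. -/
noncomputable def Rfilter (l : ℕ) (x Δ : ℝ) : ℝ :=
  (Polynomial.Chebyshev.T ℝ l).eval (-1 + 2 * (x ^ 2 - Δ ^ 2) / (1 - Δ ^ 2)) /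
    (Polynomial.Chebyshev.T ℝ l).eval (-1 + 2 * (-Δ ^ 2) / (1 - Δ ^ 2))

/-- The derivative of `cosh x * cos x` is nonpositive on `[0, π/2]`; it vanishes at `0` and its own
derivative is `-2 * sinh x * sin x`. -/
lemma sinh_mul_cos_le_cosh_mul_sin {x : ℝ} (h0 : 0 ≤ x) (h1 : x ≤ Real.pi / 2) :
    Real.sinh x * Real.cos x - Real.cosh x * Real.sin x ≤ 0 := by
  have hanti : AntitoneOn (fun y => Real.sinh y * Real.cos y - Real.cosh y * Real.sin y)
      (Set.Icc 0 (Real.pi / 2)) := by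
    refine antitoneOn_of_hasDerivWithinAt_nonpos (convex_Icc _ _) (by fun_prop)
      (f' := fun y => -2 * (Real.sinh y * Real.sin y)) (fun y _ => ?_) (fun y hy => ?_)
    · have h := ((Real.hasDerivAt_sinh y).mul (Real.hasDerivAt_cos y)).sub
        ((Real.hasDerivAt_cosh y).mul (Real.hasDerivAt_sin y))
      exact (h.congr_deriv (by ring)).hasDerivWithinAt
    · rw [interior_Icc] at hy
      have hs := Real.sin_nonneg_of_nonneg_of_le_pi hy.1.le (by linarith [hy.2, Real.pi_pos])
      have hsh := Real.sinh_nonneg_iff.2 hy.1.le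
      nlinarith [mul_nonneg hsh hs]
  simpa using hanti ⟨le_rfl, by positivity⟩ ⟨h0, h1⟩ h0

lemma cosh_mul_cos_le_one {x : ℝ} (h0 : 0 ≤ x) (h1 : x ≤ Real.pi / 2) :
    Real.cosh x * Real.cos x ≤ 1 := by
  have hanti : AntitoneOn (fun y => Real.cosh y * Real.cos y) (Set.Icc 0 (Real.pi / 2)) := by
    refine antitoneOn_of_hasDerivWithinAt_nonpos (convex_Icc _ _) (by fun_prop)
      (f' := fun y => Real.sinh y * Real.cos y - Real.cosh y * Real.sin y)
      (fun y _ => ?_) (fun y hy => ?_)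
    · have h := (Real.hasDerivAt_cosh y).mul (Real.hasDerivAt_cos y)
      exact (h.congr_deriv (by ring)).hasDerivWithinAt
    · rw [interior_Icc] at hy
      exact sinh_mul_cos_le_cosh_mul_sin hy.1.le hy.2.le
  simpa using hanti ⟨le_rfl, by positivity⟩ ⟨h0, h1⟩ h0

/-- The Gudermannian inequality `arcsin Δ ≤ artanh Δ`, after taking `cosh` of the doubles. -/
lemma cosh_two_mul_arcsin_le {Δ : ℝ} (hΔ : Δ ∈ Set.Ioo (0 : ℝ) 1) :
    Real.cosh (2 * Real.arcsin Δ) ≤ (1 + Δ ^ 2) / (1 - Δ ^ 2) := by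
  have hpos : 0 < 1 - Δ ^ 2 := by nlinarith [hΔ.1, hΔ.2]
  have h0 : 0 ≤ Real.arcsin Δ := Real.arcsin_nonneg.2 hΔ.1.le
  have h := cosh_mul_cos_le_one h0 (Real.arcsin_le_pi_div_two Δ)
  have hc : Real.cos (Real.arcsin Δ) ^ 2 = 1 - Δ ^ 2 := by
    rw [Real.cos_sq', Real.sin_arcsin (by linarith [hΔ.1]) hΔ.2.le]
  have hnn : 0 ≤ Real.cosh (Real.arcsin Δ) * Real.cos (Real.arcsin Δ) :=
    mul_nonneg (Real.cosh_pos _).le (Real.cos_arcsin_nonneg _)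
  have hsq := pow_le_one₀ hnn h (n := 2)
  rw [mul_pow, hc] at hsq
  rw [le_div_iff₀ hpos, Real.cosh_two_mul, Real.sinh_sq]
  linarith

lemma half_exp_le_eval_T (l : ℕ) {y a : ℝ} (ha : 0 ≤ a) (hy : Real.cosh a ≤ y) :
    Real.exp (l * a) / 2 ≤ (Polynomial.Chebyshev.T ℝ l).eval y := by
  have hy1 : 1 ≤ y := (Real.one_le_cosh a).trans hy
  have hle : a ≤ Real.arcosh y := by
    rw [← Real.cosh_arcosh hy1, Real.cosh_le_cosh, abs_of_nonneg ha,
      abs_of_nonneg (Real.arcosh_nonneg hy1)] at hy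
    exact hy
  rw [← Real.cosh_arcosh hy1, Polynomial.Chebyshev.T_real_cosh, Real.cosh_eq]
  push_cast
  have h1 : Real.exp (l * a) ≤ Real.exp (l * Real.arcosh y) := by gcongr
  linarith [Real.exp_pos (-(l * Real.arcosh y))]

/-- Let Δ ∈ (0, 1) and l a positive integer.  Then for every x with
`|x| ∈ [Δ, 1]`, one has `|R_l(x; Δ)| ≤ 2·e^{−2l·arcsin Δ}`. -/
theorem Rfilter_decay (Δ : ℝ) (hΔ : Δ ∈ Set.Ioo 0 1) (l : ℕ) (hl : 0 < l)
    (x : ℝ) (hx : Δ ≤ |x|) (hx1 : |x| ≤ 1) :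
    |Rfilter l x Δ| ≤ 2 * Real.exp (-(2 * l * Real.arcsin Δ)) := by
  have hpos : 0 < 1 - Δ ^ 2 := by nlinarith [hΔ.1, hΔ.2]
  have hxl : Δ ^ 2 ≤ x ^ 2 := by
    rw [← sq_abs x]
    exact pow_le_pow_left₀ hΔ.1.le hx 2
  have hxu : x ^ 2 ≤ 1 := by
    rw [← sq_abs x]
    exact pow_le_one₀ (abs_nonneg x) hx1
  have hnum : |(Polynomial.Chebyshev.T ℝ l).eval
      (-1 + 2 * (x ^ 2 - Δ ^ 2) / (1 - Δ ^ 2))| ≤ 1 := by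
    apply Polynomial.Chebyshev.abs_eval_T_real_le_one
    have h1 : 0 ≤ 2 * (x ^ 2 - Δ ^ 2) / (1 - Δ ^ 2) := div_nonneg (by linarith) hpos.le
    have h2 : 2 * (x ^ 2 - Δ ^ 2) / (1 - Δ ^ 2) ≤ 2 := by
      rw [div_le_iff₀ hpos]
      linarith
    exact abs_le.2 ⟨by linarith, by linarith⟩
  have harg : -1 + 2 * (-Δ ^ 2) / (1 - Δ ^ 2) = -((1 + Δ ^ 2) / (1 - Δ ^ 2)) := by
    field_simp
    ring
  have hden : Real.exp (l * (2 * Real.arcsin Δ)) / 2 ≤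
      |(Polynomial.Chebyshev.T ℝ l).eval (-1 + 2 * (-Δ ^ 2) / (1 - Δ ^ 2))| := by
    have h := half_exp_le_eval_T l (mul_nonneg zero_le_two (Real.arcsin_nonneg.2 hΔ.1.le))
      (cosh_two_mul_arcsin_le hΔ)
    rw [harg, Polynomial.Chebyshev.T_eval_neg]
    simpa [abs_mul] using h.trans (le_abs_self _)
  rw [Rfilter, abs_div]
  calc
    _ ≤ 1 / (Real.exp (l * (2 * Real.arcsin Δ)) / 2) := by gcongr
    _ = 2 * Real.exp (-(2 * l * Real.arcsin Δ)) := by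
      rw [Real.exp_neg, one_div_div, div_eq_mul_inv,
        show (l : ℝ) * (2 * Real.arcsin Δ) = 2 * l * Real.arcsin Δ by ring]
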